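/- arXiv:2210.00785 — 3 statements merged into one kernel-verified Lean document; each statement's English description precedes it below -/
import Mathlib

section
/- Let V = (Q, T, ℓ) be a continuous VASS of dimension d, let x, y ∈ ℚ_{≥0}^d, and let χ be a cycle with p(x) →^χ p(y) in the nonnegative semantics. Then there exists a linear path scheme σ = π₀χ₁*π₁⋯χₙ*πₙ over V such that: n ≤ 2(|T| + d + 1) + 1; every π_i is a simple path; |χ_i| ≤ 2·|Q|·(d·|T|^{d+1} + 1) for all 1 ≤ i ≤ n; and y ∈ Reach^x_{≥0}(σ). (Lemma: short LPS for nonnegative reachability along iterations of a cycle.) -/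
open Pointwise

/-- A continuous VASS of dimension `d`: a finite set of states `Q`,
a finite set of transitions `T ⊆ Q × Q`, and a labelling of transitions
by vectors in `ℚ^d`. -/
structure CVASS (d : ℕ) where
  Q : Type
  [deceq : DecidableEq Q]
  [fin : Fintype Q]
  T : Finset (Q × Q)
  label : Q × Q → (Fin d → ℚ)

attribute [instance] CVASS.deceq CVASS.fin

namespace CVASS

variable {d : ℕ} (V : CVASS d)

/-- `V.PathFrom p π q` : the list of transitions `π` is a valid path of `V`
from state `p` to state `q`. -/
inductive PathFrom : V.Q → List (V.Q × V.Q) → V.Q → Prop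
  | nil (p : V.Q) : PathFrom p [] p
  | cons {p q r : V.Q} {rest : List (V.Q × V.Q)} :
      (p, q) ∈ V.T → PathFrom q rest r → PathFrom p ((p, q) :: rest) r

/-- `V.RunFrom p x π q y` : there is a run of `V` lifted from the path `π`,
starting in configuration `p(x)` and ending in configuration `q(y)`, where
each transition is scaled by some rational coefficient in `(0,1]`
(ℚ-semantics: counters may become negative). -/
inductive RunFrom : V.Q → (Fin d → ℚ) → List (V.Q × V.Q) → V.Q → (Fin d → ℚ) → Prop
  | nil (p : V.Q) (x : Fin d → ℚ) : RunFrom p x [] p x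
  | cons {p q r : V.Q} {x y : Fin d → ℚ} {α : ℚ} {rest : List (V.Q × V.Q)} :
      (p, q) ∈ V.T → 0 < α → α ≤ 1 →
      RunFrom q (x + α • V.label (p, q)) rest r y →
      RunFrom p x ((p, q) :: rest) r y

/-- `V.NNRunFrom p x π q y` : as `RunFrom`, but every configuration along the
run (including the first and the last one) must have nonnegative counters
(ℚ≥0-semantics). -/
inductive NNRunFrom : V.Q → (Fin d → ℚ) → List (V.Q × V.Q) → V.Q → (Fin d → ℚ) → Prop
  | nil (p : V.Q) (x : Fin d → ℚ) : (∀ i, 0 ≤ x i) → NNRunFrom p x [] p x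
  | cons {p q r : V.Q} {x y : Fin d → ℚ} {α : ℚ} {rest : List (V.Q × V.Q)} :
      (p, q) ∈ V.T → (∀ i, 0 ≤ x i) → 0 < α → α ≤ 1 →
      NNRunFrom q (x + α • V.label (p, q)) rest r y →
      NNRunFrom p x ((p, q) :: rest) r y

end CVASS

/-- The list of states visited by a path `π` starting at state `p`. -/
def pathStates {Q : Type} (p : Q) (π : List (Q × Q)) : List Q :=
  p :: π.map Prod.snd

/-- A path is simple if it visits no state twice. -/
def SimplePath {Q : Type} (p : Q) (π : List (Q × Q)) : Prop :=
  (pathStates p π).Nodup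

/-- A cycle is simple if it is nonempty and visits no state twice, except
that its first state equals its last state. -/
def SimpleCycle {Q : Type} (π : List (Q × Q)) : Prop :=
  π ≠ [] ∧ (π.map Prod.snd).Nodup

/-- The path `π₀ χ₁^{k₁} π₁ ⋯ χₙ^{kₙ} πₙ` determined by a linear path scheme
`π₀ χ₁* π₁ ⋯ χₙ* πₙ` (given by the paths `πs` and the cycles `χs`) and
exponents `ks`. -/
def lpsConcat {Q : Type} {n : ℕ} (πs : Fin (n + 1) → List (Q × Q))
    (χs : Fin n → List (Q × Q)) (ks : Fin n → ℕ) : List (Q × Q) :=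
  πs 0 ++ (List.ofFn fun i : Fin n =>
    (List.replicate (ks i) (χs i)).flatten ++ πs i.succ).flatten

namespace CVASS

section helpers

variable {d : ℕ} {V : CVASS d}

theorem PathFrom.append {p q r : V.Q} {a b : List (V.Q × V.Q)}
    (h : V.PathFrom p a q) (h' : V.PathFrom q b r) : V.PathFrom p (a ++ b) r := by
  induction h with
  | nil p => exact h'
  | cons ht _ ih => exact PathFrom.cons ht (ih h')

theorem PathFrom.split {p r : V.Q} (a : List (V.Q × V.Q)) {b : List (V.Q × V.Q)}
    (h : V.PathFrom p (a ++ b) r) : ∃ q, V.PathFrom p a q ∧ V.PathFrom q b r := by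
  induction a generalizing p with
  | nil => exact ⟨p, PathFrom.nil p, h⟩
  | cons t a ih =>
    cases h with
    | cons ht h =>
      obtain ⟨q, h1, h2⟩ := ih h
      exact ⟨q, PathFrom.cons ht h1, h2⟩

theorem PathFrom.mem {p q : V.Q} {a : List (V.Q × V.Q)}
    (h : V.PathFrom p a q) : ∀ t ∈ a, t ∈ V.T := by
  induction h with
  | nil p => simp
  | cons ht _ ih =>
    intro t h
    rcases List.mem_cons.1 h with rfl | h
    · exact ht
    · exact ih t h

theorem NNRunFrom.append {p q r : V.Q} {x y z : Fin d → ℚ} {a b : List (V.Q × V.Q)}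
    (h : V.NNRunFrom p x a q y) (h' : V.NNRunFrom q y b r z) :
    V.NNRunFrom p x (a ++ b) r z := by
  induction h with
  | nil p => exact h'
  | cons ht hx h0 h1 _ ih => exact NNRunFrom.cons ht hx h0 h1 (ih h')

theorem NNRunFrom.nonneg_end {p q : V.Q} {x y : Fin d → ℚ} {a : List (V.Q × V.Q)}
    (h : V.NNRunFrom p x a q y) : ∀ i, 0 ≤ y i := by
  induction h with
  | nil p x hx => exact hx
  | cons ht hx h0 h1 _ ih => exact ih

theorem NNRunFrom.nonneg_start {p q : V.Q} {x y : Fin d → ℚ} {a : List (V.Q × V.Q)}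
    (h : V.NNRunFrom p x a q y) : ∀ i, 0 ≤ x i := by
  cases h with
  | nil _ _ hx => exact hx
  | cons ht hx h0 h1 _ => exact hx

theorem exists_suffix {p q r : V.Q} {σ : List (V.Q × V.Q)} (h : V.PathFrom q σ r)
    (hs : SimplePath q σ) (hp : p ∈ pathStates q σ) :
    ∃ σ', V.PathFrom p σ' r ∧ SimplePath p σ' ∧ ∀ t ∈ σ', t ∈ σ := by
  induction h with
  | nil q =>
    simp [pathStates] at hp
    subst hp
    exact ⟨[], PathFrom.nil _, hs, by simp⟩
  | @cons a b c rest ht hr ih =>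
    by_cases hpa : p = a
    · subst hpa
      exact ⟨_, PathFrom.cons ht hr, hs, fun _ h => h⟩
    · have hs' : SimplePath b rest := by
        unfold SimplePath pathStates at hs ⊢
        simp only [List.map_cons] at hs
        exact (List.nodup_cons.1 hs).2
      have hp' : p ∈ pathStates b rest := by
        unfold pathStates at hp ⊢
        simp only [List.map_cons] at hp
        exact (List.mem_cons.1 hp).resolve_left hpa
      obtain ⟨σ', h1, h2, h3⟩ := ih hs' hp'
      exact ⟨σ', h1, h2, fun t h => List.mem_cons_of_mem _ (h3 t h)⟩

theorem exists_simple {p r : V.Q} {π : List (V.Q × V.Q)} (h : V.PathFrom p π r) :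
    ∃ σ, V.PathFrom p σ r ∧ SimplePath p σ ∧ ∀ t ∈ σ, t ∈ π := by
  induction h with
  | nil p => exact ⟨[], PathFrom.nil _, by simp [SimplePath, pathStates], by simp⟩
  | @cons a b c rest ht hr ih =>
    obtain ⟨σ, h1, h2, h3⟩ := ih
    by_cases ha : a ∈ pathStates b σ
    · obtain ⟨σ', g1, g2, g3⟩ := exists_suffix h1 h2 ha
      exact ⟨σ', g1, g2, fun t h => List.mem_cons_of_mem _ (h3 t (g3 t h))⟩
    · refine ⟨(a, b) :: σ, PathFrom.cons ht h1, ?_, ?_⟩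
      · unfold SimplePath pathStates at h2 ⊢
        simp only [List.map_cons]
        exact List.nodup_cons.2 ⟨ha, h2⟩
      · intro t h
        rcases List.mem_cons.1 h with rfl | h
        · simp
        · exact List.mem_cons_of_mem _ (h3 t h)

theorem simple_length {p : V.Q} {σ : List (V.Q × V.Q)} (h : SimplePath p σ) :
    σ.length + 1 ≤ Fintype.card V.Q := by
  have := List.Nodup.length_le_card h
  simpa [pathStates] using this

/-- Positive combinations of the labels in `S`. -/
def PosComb (V : CVASS d) (S : Finset (V.Q × V.Q)) (v : Fin d → ℚ) : Prop :=
  ∃ w : V.Q × V.Q → ℚ, (∀ t ∈ S, 0 < w t) ∧ v = ∑ t ∈ S, w t • V.label t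

theorem PosComb.add_insert {S : Finset (V.Q × V.Q)} {v : Fin d → ℚ} (h : PosComb V S v)
    (t : V.Q × V.Q) {α : ℚ} (hα : 0 < α) : PosComb V (insert t S) (α • V.label t + v) := by
  obtain ⟨w, hw, rfl⟩ := h
  by_cases ht : t ∈ S
  · rw [Finset.insert_eq_of_mem ht]
    refine ⟨fun s => w s + if s = t then α else 0, ?_, ?_⟩
    · intro s hs
      have := hw s hs
      dsimp only
      split_ifs <;> linarith
    · simp [add_smul, Finset.sum_add_distrib, ite_smul, ht, add_comm]
  · refine ⟨fun s => if s = t then α else w s, ?_, ?_⟩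
    · intro s hs
      dsimp only
      split_ifs with h
      · exact hα
      · exact hw s ((Finset.mem_insert.1 hs).resolve_left h)
    · rw [Finset.sum_insert ht]
      simp only [if_true]
      congr 1
      apply Finset.sum_congr rfl
      intro s hs
      rw [if_neg]
      rintro rfl
      exact ht hs

theorem PosComb.sub {S : Finset (V.Q × V.Q)} {v : Fin d → ℚ} (h : PosComb V S v)
    {t : V.Q × V.Q} (ht : t ∈ S) :
    ∃ ε : ℚ, 0 < ε ∧ ∀ α, α ≤ ε → PosComb V S (v - α • V.label t) := by
  obtain ⟨w, hw, rfl⟩ := h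
  refine ⟨w t / 2, half_pos (hw t ht), ?_⟩
  intro α hα
  refine ⟨fun s => w s - if s = t then α else 0, ?_, ?_⟩
  · intro s hs
    have := hw s hs
    dsimp only
    split_ifs with h
    · subst h; linarith
    · linarith
  · simp [sub_smul, Finset.sum_sub_distrib, ite_smul, ht]

theorem NNRunFrom.posComb {p q : V.Q} {x y : Fin d → ℚ} {a : List (V.Q × V.Q)}
    (h : V.NNRunFrom p x a q y) : PosComb V a.toFinset (y - x) := by
  induction h with
  | nil p x hx => exact ⟨fun _ => 1, by simp, by simp⟩
  | @cons p q r x y α rest ht hx h0 h1 _ ih =>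
    have := ih.add_insert (p, q) h0
    rw [List.toFinset_cons]
    convert this using 1
    abel

/-- Support-feasibility of a list of transitions from a set of positive counters. -/
def Feas (V : CVASS d) : (Fin d → Prop) → List (V.Q × V.Q) → Prop
  | _, [] => True
  | P, t :: r => (∀ i, V.label t i < 0 → P i) ∧ Feas V (fun i => P i ∨ V.label t i ≠ 0) r

theorem Feas.mono {a : List (V.Q × V.Q)} {P P' : Fin d → Prop} (h : Feas V P a)
    (hP : ∀ i, P i → P' i) : Feas V P' a := by
  induction a generalizing P P' with
  | nil => trivial
  | cons t r ih =>
    refine ⟨fun i hi => hP i (h.1 i hi), ih h.2 ?_⟩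
    rintro i (hi | hi)
    · exact Or.inl (hP i hi)
    · exact Or.inr hi

theorem NNRunFrom.feas {p q : V.Q} {x y : Fin d → ℚ} {a : List (V.Q × V.Q)}
    (h : V.NNRunFrom p x a q y) : Feas V (fun i => 0 < x i) a := by
  induction h with
  | nil p x hx => trivial
  | @cons p q r x y α rest ht hx h0 h1 hr ih =>
    refine ⟨?_, ih.mono ?_⟩
    · intro i hi
      have := hr.nonneg_start i
      simp only [Pi.add_apply, Pi.smul_apply, smul_eq_mul] at this
      nlinarith
    · intro i hi
      by_cases hl : V.label (p, q) i = 0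
      · left
        simpa [hl] using hi
      · exact Or.inr hl

theorem step_exists (l x : Fin d → ℚ) (hx : ∀ i, 0 ≤ x i) (hl : ∀ i, l i < 0 → 0 < x i)
    (ε : ℚ) (hε : 0 < ε) :
    ∃ α, 0 < α ∧ α ≤ 1 ∧ α ≤ ε ∧ (∀ i, 0 ≤ (x + α • l) i) ∧
      (∀ i, 0 < x i → 0 < (x + α • l) i) ∧ (∀ i, l i ≠ 0 → 0 < (x + α • l) i) := by
  have key : ∃ β : ℚ, 0 < β ∧ ∀ i, l i < 0 → β * (-l i) < x i := by
    have : ∀ i, ∃ β : ℚ, 0 < β ∧ (l i < 0 → β * (-l i) < x i) := by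
      intro i
      by_cases h : l i < 0
      · have h1 := hl i h
        refine ⟨x i / (2 * (-l i)), div_pos h1 (by linarith), fun _ => ?_⟩
        have : x i / (2 * (-l i)) * (-l i) = x i / 2 := by
          have : l i ≠ 0 := h.ne
          field_simp
        rw [this]; linarith
      · exact ⟨1, one_pos, fun h' => absurd h' h⟩
    choose b hb hb' using this
    rcases isEmpty_or_nonempty (Fin d) with he | he
    · exact ⟨1, one_pos, fun i => he.elim i⟩
    · obtain ⟨j, hj⟩ := Finite.exists_min b
      refine ⟨b j, hb j, fun i hi => ?_⟩
      have := hb' i hi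
      have := hj i
      nlinarith
  obtain ⟨β, hβ, hb⟩ := key
  have hα : 0 < min β (min 1 ε) := lt_min hβ (lt_min one_pos hε)
  have hαβ : min β (min 1 ε) ≤ β := min_le_left _ _
  have hα1 : min β (min 1 ε) ≤ 1 := (min_le_right _ _).trans (min_le_left _ _)
  have hαε : min β (min 1 ε) ≤ ε := (min_le_right _ _).trans (min_le_right _ _)
  generalize min β (min 1 ε) = α at *
  have hneg : ∀ i, l i < 0 → 0 < x i + α * l i := by
    intro i hi
    have := hb i hi
    nlinarith
  refine ⟨α, hα, hα1, hαε, ?_, ?_, ?_⟩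
  · intro i
    simp only [Pi.add_apply, Pi.smul_apply, smul_eq_mul]
    rcases lt_or_ge (l i) 0 with h | h
    · exact (hneg i h).le
    · have := hx i
      positivity
  · intro i hi
    simp only [Pi.add_apply, Pi.smul_apply, smul_eq_mul]
    rcases lt_or_ge (l i) 0 with h | h
    · exact hneg i h
    · positivity
  · intro i hi
    simp only [Pi.add_apply, Pi.smul_apply, smul_eq_mul]
    rcases lt_or_ge (l i) 0 with h | h
    · exact hneg i h
    · have h' : 0 < l i := lt_of_le_of_ne h (Ne.symm hi)
      have := hx i
      positivity

theorem fire_one {S : Finset (V.Q × V.Q)} {x g : Fin d → ℚ} (hx : ∀ i, 0 ≤ x i)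
    (hg : PosComb V S (g - x)) {t : V.Q × V.Q} (htS : t ∈ S) (htT : t ∈ V.T)
    (hl : ∀ i, V.label t i < 0 → 0 < x i) :
    ∃ z, V.NNRunFrom t.1 x [t] t.2 z ∧ (∀ i, 0 < x i → 0 < z i) ∧
      (∀ i, V.label t i ≠ 0 → 0 < z i) ∧ PosComb V S (g - z) := by
  obtain ⟨ε, hε, hS⟩ := hg.sub htS
  obtain ⟨α, h0, h1, h2, h3, h4, h5⟩ := step_exists (V.label t) x hx hl ε hε
  refine ⟨x + α • V.label t, ?_, h4, h5, ?_⟩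
  · obtain ⟨a, b⟩ := t
    exact NNRunFrom.cons htT hx h0 h1 (NNRunFrom.nil _ _ h3)
  · have := hS α h2
    rwa [sub_sub] at this

theorem fire_path {S : Finset (V.Q × V.Q)} {p q : V.Q} {σ : List (V.Q × V.Q)}
    (h : V.PathFrom p σ q) : ∀ {x g : Fin d → ℚ}, (∀ i, 0 ≤ x i) →
    PosComb V S (g - x) → (∀ t ∈ σ, t ∈ S) → (∀ t ∈ σ, ∀ i, V.label t i ≠ 0 → 0 < x i) →
    ∃ z, V.NNRunFrom p x σ q z ∧ (∀ i, 0 < x i → 0 < z i) ∧ PosComb V S (g - z) := by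
  induction h with
  | nil p => intro x g hx hg _ _; exact ⟨x, NNRunFrom.nil _ _ hx, fun _ h => h, hg⟩
  | @cons a b c rest ht hr ih =>
    intro x g hx hg hS hP
    obtain ⟨z, hz, hz1, hz2, hz3⟩ := fire_one hx hg (hS _ List.mem_cons_self) ht
      (fun i hi => hP _ List.mem_cons_self i hi.ne)
    obtain ⟨z', hz', hz1', hz2'⟩ := ih hz.nonneg_end hz3
      (fun t h => hS t (List.mem_cons_of_mem _ h))
      (fun t h i hi => hz1 i (hP t (List.mem_cons_of_mem _ h) i hi))
    exact ⟨z', hz.append hz', fun i hi => hz1' i (hz1 i hi), hz2'⟩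

/-- Runs along linear path schemes with `n` cycles of length at most `B`. -/
inductive LRun (V : CVASS d) (B : ℕ) : V.Q → (Fin d → ℚ) → ℕ → V.Q → (Fin d → ℚ) → Prop
  | last {p q : V.Q} {x y : Fin d → ℚ} {π : List (V.Q × V.Q)} :
      V.PathFrom p π q → SimplePath p π → V.NNRunFrom p x π q y → LRun V B p x 0 q y
  | cons {p q r : V.Q} {x y z w : Fin d → ℚ} {π c : List (V.Q × V.Q)} {k n : ℕ} :
      V.PathFrom p π q → SimplePath p π → V.NNRunFrom p x π q y →
      V.PathFrom q c q → c ≠ [] → c.length ≤ B →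
      V.NNRunFrom q y (List.replicate k c).flatten q z →
      LRun V B q z n r w → LRun V B p x (n + 1) r w

theorem LRun.append {B : ℕ} {p q r : V.Q} {x y z w : Fin d → ℚ} {c : List (V.Q × V.Q)}
    {k n m : ℕ} (h : LRun V B p x n q y) (hc : V.PathFrom q c q) (hc0 : c ≠ [])
    (hcB : c.length ≤ B) (hk : V.NNRunFrom q y (List.replicate k c).flatten q z)
    (h' : LRun V B q z m r w) : LRun V B p x (n + m + 1) r w := by
  induction h with
  | last h1 h2 h3 => rw [zero_add]; exact LRun.cons h1 h2 h3 hc hc0 hcB hk h'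
  | @cons p q' r' x y' z' w' π c' k' n' h1 h2 h3 h4 h5 h6 h7 _ ih =>
    have := LRun.cons h1 h2 h3 h4 h5 h6 h7 (ih hc hk h')
    rwa [show n' + 1 + m + 1 = n' + m + 1 + 1 by omega]

theorem LRun.toFin {B : ℕ} {p q : V.Q} {x y : Fin d → ℚ} {n : ℕ} (h : LRun V B p x n q y) :
    ∃ (s : Fin (n + 2) → V.Q) (πs : Fin (n + 1) → List (V.Q × V.Q))
      (χs : Fin n → List (V.Q × V.Q)),
      s 0 = p ∧ s (Fin.last (n + 1)) = q ∧
      (∀ i : Fin (n + 1), V.PathFrom (s i.castSucc) (πs i) (s i.succ)) ∧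
      (∀ i : Fin (n + 1), SimplePath (s i.castSucc) (πs i)) ∧
      (∀ i : Fin n, V.PathFrom (s i.succ.castSucc) (χs i) (s i.succ.castSucc) ∧
        χs i ≠ []) ∧
      (∀ i : Fin n, (χs i).length ≤ B) ∧
      (∃ ks : Fin n → ℕ, V.NNRunFrom p x (lpsConcat πs χs ks) q y) := by
  induction h with
  | @last p q x y π h1 h2 h3 =>
    refine ⟨![p, q], fun _ => π, Fin.elim0, rfl, rfl, ?_, ?_, fun i => i.elim0,
      fun i => i.elim0, Fin.elim0, ?_⟩
    · intro i; fin_cases i; exact h1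
    · intro i; fin_cases i; exact h2
    · simpa [lpsConcat] using h3
  | @cons p q r x y z w π c k n h1 h2 h3 h4 h5 h6 h7 _ ih =>
    obtain ⟨s, πs, χs, hs0, hsl, a1, a2, a3, a4, ks, a5⟩ := ih
    refine ⟨Fin.cons p s, Fin.cons π πs, Fin.cons c χs, rfl, ?_, ?_, ?_, ?_, ?_,
      Fin.cons k ks, ?_⟩
    · rw [← Fin.succ_last, Fin.cons_succ, hsl]
    · intro i
      refine Fin.cases ?_ (fun j => ?_) i
      · simpa [hs0] using h1
      · simpa [Fin.castSucc_succ] using a1 j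
    · intro i
      refine Fin.cases ?_ (fun j => ?_) i
      · simpa [hs0] using h2
      · simpa [Fin.castSucc_succ] using a2 j
    · intro i
      refine Fin.cases ?_ (fun j => ?_) i
      · simp only [Fin.castSucc_succ, Fin.cons_succ, Fin.cons_zero, Fin.castSucc_zero, hs0]
        exact ⟨h4, h5⟩
      · simpa only [Fin.castSucc_succ, Fin.cons_succ] using a3 j
    · intro i
      refine Fin.cases ?_ (fun j => ?_) i
      · simpa using h6
      · simpa using a4 j
    · have := h3.append (h7.append a5)
      simpa [lpsConcat, List.ofFn_succ] using this

/-- The number of zero counters. -/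
def zc (x : Fin d → ℚ) : Finset (Fin d) := Finset.univ.filter fun i => ¬ 0 < x i

open Classical in
/-- The transitions touching a zero counter. -/
noncomputable def zt (V : CVASS d) (x : Fin d → ℚ) : Finset (V.Q × V.Q) :=
  V.T.filter fun t => ∃ i, V.label t i ≠ 0 ∧ ¬ 0 < x i

theorem forward {S : Finset (V.Q × V.Q)} {B : ℕ}
    (D : ∀ t ∈ S, (∃ c, V.PathFrom t.1 c t.1 ∧ c ≠ [] ∧ c.length ≤ B) ∧
      (∃ c, V.PathFrom t.2 c t.2 ∧ c ≠ [] ∧ c.length ≤ B)) (g : Fin d → ℚ) :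
    ∀ (a : List (V.Q × V.Q)) (p q' q : V.Q) (σ : List (V.Q × V.Q)) (x : Fin d → ℚ),
    V.PathFrom p σ q' → (∀ t ∈ σ, t ∈ S) → (∀ t ∈ σ, ∀ i, V.label t i ≠ 0 → 0 < x i) →
    V.PathFrom q' a q → (∀ t ∈ a, t ∈ S) → Feas V (fun i => 0 < x i) a → (∀ i, 0 ≤ x i) →
    PosComb V S (g - x) →
    ∃ n z, n ≤ (zc x).card + (zt V x).card ∧ LRun V B p x n q z ∧ (∀ i, 0 ≤ z i) ∧
      (∀ i, 0 < x i → 0 < z i) ∧ (∀ t ∈ a, ∀ i, V.label t i ≠ 0 → 0 < z i) ∧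
      PosComb V S (g - z) := by
  intro a
  induction a with
  | nil =>
    intro p q' q σ x hσ hσS hσP ha _ _ hx hg
    cases ha
    obtain ⟨σ', e1, e2, e3⟩ := exists_simple hσ
    obtain ⟨z, f1, f2, f3⟩ := fire_path e1 hx hg (fun t h => hσS t (e3 t h))
      (fun t h => hσP t (e3 t h))
    exact ⟨0, z, Nat.zero_le _, LRun.last e1 e2 f1, f1.nonneg_end, f2, by simp, f3⟩
  | cons t a ih =>
    intro p q' q σ x hσ hσS hσP ha haS hF hx hg
    have htS : t ∈ S := haS t List.mem_cons_self
    have haS' : ∀ s ∈ a, s ∈ S := fun s h => haS s (List.mem_cons_of_mem _ h)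
    obtain ⟨q1, q2⟩ := t
    cases ha with
    | cons htT ha =>
    have ht1 : V.PathFrom q' [(q', q2)] q2 := PathFrom.cons htT (PathFrom.nil _)
    by_cases hP : ∀ i, V.label (q', q2) i ≠ 0 → 0 < x i
    · obtain ⟨n, z, r1, r2, r3, r4, r5, r6⟩ := ih p q2 q (σ ++ [(q', q2)]) x
        (hσ.append ht1)
        (by
          intro s hs
          rcases List.mem_append.1 hs with h | h
          · exact hσS s h
          · rw [List.mem_singleton.1 h]; exact htS)
        (by
          intro s hs
          rcases List.mem_append.1 hs with h | h
          · exact hσP s h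
          · rw [List.mem_singleton.1 h]; exact hP)
        ha haS' (hF.2.mono (by
          rintro i (h | h)
          · exact h
          · exact hP i h)) hx hg
      refine ⟨n, z, r1, r2, r3, r4, ?_, r6⟩
      intro s hs
      rcases List.mem_cons.1 hs with rfl | h
      · exact fun i hi => r4 i (hP i hi)
      · exact r5 s h
    · obtain ⟨σ', e1, e2, e3⟩ := exists_simple hσ
      obtain ⟨x0, f1, f2, f3⟩ := fire_path e1 hx hg (fun t h => hσS t (e3 t h))
        (fun t h => hσP t (e3 t h))
      obtain ⟨x1, g1, g2, g3, g4⟩ := fire_one f1.nonneg_end f3 htS htT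
        (fun i hi => f2 i (hF.1 i hi))
      obtain ⟨n, z, r1, r2, r3, r4, r5, r6⟩ := ih q2 q2 q [] x1 (PathFrom.nil _)
        (by simp) (by simp) ha haS' (hF.2.mono (by
          rintro i (h | h)
          · exact g2 i (f2 i h)
          · exact g3 i h)) g1.nonneg_end g4
      have hxx : ∀ i, 0 < x i → 0 < x1 i := fun i hi => g2 i (f2 i hi)
      push Not at hP
      obtain ⟨i, hi, hxi⟩ := hP
      have c1 : (zc x1).card < (zc x).card := by
        apply Finset.card_lt_card
        rw [Finset.ssubset_iff_of_subset]
        · refine ⟨i, ?_, ?_⟩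
          · simp [zc, hxi]
          · simp [zc, g3 i hi]
        · intro j hj
          simp only [zc, Finset.mem_filter, Finset.mem_univ, true_and] at hj ⊢
          exact fun h => hj (hxx j h)
      have c2 : (zt V x1).card < (zt V x).card := by
        apply Finset.card_lt_card
        rw [Finset.ssubset_iff_of_subset]
        · refine ⟨(q', q2), ?_, ?_⟩
          · simp only [zt, Finset.mem_filter]
            exact ⟨htT, i, hi, not_lt.2 hxi⟩
          · simp only [zt, Finset.mem_filter]
            rintro ⟨_, j, hj, hj'⟩
            exact hj' (g3 j hj)
        · intro s hs
          simp only [zt, Finset.mem_filter] at hs ⊢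
          obtain ⟨hs, j, hj, hj'⟩ := hs
          exact ⟨hs, j, hj, fun h => hj' (hxx j h)⟩
      refine ⟨n + 1 + 1, z, by omega, ?_, r3, fun i hi => r4 i (hxx i hi), ?_, r6⟩
      · obtain ⟨⟨c, hc1, hc2, hc3⟩, ⟨c', hc1', hc2', hc3'⟩⟩ := D _ htS
        have hB : 1 ≤ B := le_trans (List.length_pos_iff.2 hc2) hc3
        by_cases hq : q' = q2
        · subst hq
          refine LRun.cons e1 e2 f1 ht1 (by simp) (by simpa using hB) (k := 1)
            (by simpa using g1) ?_
          exact LRun.cons (PathFrom.nil _) (by simp [SimplePath, pathStates])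
            (NNRunFrom.nil _ _ g1.nonneg_end) hc1' hc2' hc3' (k := 0)
            (by simpa using NNRunFrom.nil _ _ g1.nonneg_end) r2
        · refine LRun.cons e1 e2 f1 hc1 hc2 hc3 (k := 0)
            (by simpa using NNRunFrom.nil _ _ f1.nonneg_end) ?_
          exact LRun.cons ht1 (by simp [SimplePath, pathStates, hq])
            g1 hc1' hc2' hc3' (k := 0)
            (by simpa using NNRunFrom.nil _ _ g1.nonneg_end) r2
      · intro s hs
        rcases List.mem_cons.1 hs with rfl | h
        · exact fun i hi => r4 i (g3 i hi)
        · exact r5 s h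

/-- The reversed system. -/
abbrev rev (V : CVASS d) : CVASS d where
  Q := V.Q
  T := V.T.image Prod.swap
  label := fun t => - V.label t.swap

/-- The reversed path. -/
def rp {Q : Type} (π : List (Q × Q)) : List (Q × Q) := (π.map Prod.swap).reverse

theorem rp_rp {Q : Type} (π : List (Q × Q)) : rp (rp π) = π := by
  simp [rp, List.map_reverse]

theorem rp_flat {Q : Type} (k : ℕ) (c : List (Q × Q)) :
    rp (List.replicate k c).flatten = (List.replicate k (rp c)).flatten := by
  induction k with
  | zero => simp [rp]
  | succ k ih =>
    rw [List.replicate_succ', List.replicate_succ]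
    simp only [List.flatten_append, List.flatten_cons, List.flatten_nil, List.append_nil]
    rw [← ih]
    simp [rp]

theorem PathFrom.rev {p q : V.Q} {π : List (V.Q × V.Q)} (h : V.PathFrom p π q) :
    V.rev.PathFrom q (rp π) p := by
  induction h with
  | nil p => exact PathFrom.nil _
  | @cons a b c rest ht _ ih =>
    have : V.rev.PathFrom b [(b, a)] a :=
      PathFrom.cons (Finset.mem_image.2 ⟨(a, b), ht, rfl⟩) (PathFrom.nil _)
    simpa [rp] using ih.append this

theorem NNRunFrom.rev {p q : V.Q} {x y : Fin d → ℚ} {π : List (V.Q × V.Q)}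
    (h : V.NNRunFrom p x π q y) : V.rev.NNRunFrom q y (rp π) p x := by
  induction h with
  | nil p x hx => exact NNRunFrom.nil _ _ hx
  | @cons a b c x y α rest ht hx h0 h1 hr ih =>
    have : V.rev.NNRunFrom b (x + α • V.label (a, b)) [(b, a)] a x := by
      refine NNRunFrom.cons (Finset.mem_image.2 ⟨(a, b), ht, rfl⟩) hr.nonneg_start h0 h1 ?_
      have e : x + α • V.label (a, b) + α • V.rev.label (b, a) = x := by
        simp [CVASS.rev]
      rw [e]
      exact NNRunFrom.nil _ _ hx
    simpa [rp] using ih.append this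

theorem rev_states {p q : V.Q} {π : List (V.Q × V.Q)} (h : V.PathFrom p π q) :
    pathStates q (rp π) = (pathStates p π).reverse := by
  induction h with
  | nil p => rfl
  | @cons a b c rest ht _ ih =>
    simp only [pathStates, rp] at ih ⊢
    simp only [List.map_cons, List.reverse_cons, List.map_append, List.map_nil, Prod.snd_swap]
    rw [← List.cons_append, ih]
    simp

theorem rev_simple {p q : V.Q} {π : List (V.Q × V.Q)} (h : V.PathFrom p π q)
    (hs : SimplePath p π) : SimplePath q (rp π) := by
  unfold SimplePath
  rw [rev_states h]
  exact List.nodup_reverse.2 hs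

theorem LRun.rev {B : ℕ} {p q : V.Q} {x y : Fin d → ℚ} {n : ℕ} (h : LRun V B p x n q y) :
    LRun V.rev B q y n p x := by
  induction h with
  | last h1 h2 h3 => exact LRun.last h1.rev (rev_simple h1 h2) h3.rev
  | @cons p q r x y z w π c k n h1 h2 h3 h4 h5 h6 h7 _ ih =>
    refine LRun.append (m := 0) (k := k) ih h4.rev (by simpa [rp] using h5)
      (by simpa [rp] using h6) ?_ (LRun.last h1.rev (rev_simple h1 h2) h3.rev)
    rw [← rp_flat]
    exact h7.rev

theorem LRun.of_rev {B : ℕ} {p q : V.Q} {x y : Fin d → ℚ} {n : ℕ}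
    (h : LRun V.rev B p x n q y) : LRun V B q y n p x := by
  have key : ∀ (T' : Finset (V.Q × V.Q)) (l' : V.Q × V.Q → Fin d → ℚ), T' = V.T → l' = V.label →
      LRun (⟨V.Q, T', l'⟩ : CVASS d) B q y n p x → LRun V B q y n p x := by
    rintro T' l' rfl rfl h
    exact h
  exact key _ _ (by simp [Finset.image_image]) (by ext t; simp) h.rev

theorem one_iter {p q : V.Q} {θ : List (V.Q × V.Q)} (h : V.PathFrom p θ q)
    (b : V.Q × V.Q → ℚ) : ∀ (u : Fin d → ℚ), (∀ t ∈ θ, 0 < b t) → (∀ t ∈ θ, b t ≤ 1) →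
    (∀ i, (θ.map fun t => b t * |V.label t i|).sum ≤ u i) →
    V.NNRunFrom p u θ q (u + (θ.map fun t => b t • V.label t).sum) := by
  induction h with
  | nil p =>
    intro u _ _ hu
    simpa using NNRunFrom.nil p u (by simpa using hu)
  | @cons a c e rest ht hr ih =>
    intro u h0 h1 hu
    have k0 := h0 _ List.mem_cons_self
    have hnn : ∀ i, 0 ≤ (rest.map fun t => b t * |V.label t i|).sum := by
      intro i
      apply List.sum_nonneg
      intro s hs
      obtain ⟨t, ht, rfl⟩ := List.mem_map.1 hs
      have := h0 t (List.mem_cons_of_mem _ ht)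
      positivity
    simp only [List.map_cons, List.sum_cons] at hu ⊢
    rw [← add_assoc]
    refine NNRunFrom.cons ht ?_ k0 (h1 _ List.mem_cons_self)
      (ih _ (fun t h => h0 t (List.mem_cons_of_mem _ h))
      (fun t h => h1 t (List.mem_cons_of_mem _ h)) ?_)
    · intro i
      have h2 := hu i
      have h3 := hnn i
      have : 0 ≤ b (a, c) * |V.label (a, c) i| := by positivity
      linarith
    · intro i
      have h2 := hu i
      simp only [Pi.add_apply, Pi.smul_apply, smul_eq_mul]
      have := neg_abs_le (V.label (a, c) i)
      nlinarith

theorem iterate {p : V.Q} {θ : List (V.Q × V.Q)} (h : V.PathFrom p θ p)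
    (b : V.Q × V.Q → ℚ) (h0 : ∀ t ∈ θ, 0 < b t) (h1 : ∀ t ∈ θ, b t ≤ 1) :
    ∀ (k : ℕ) (u : Fin d → ℚ), (∀ i, 0 ≤ u i) →
    (∀ i, (θ.map fun t => b t * |V.label t i|).sum ≤ u i) →
    (∀ i, (θ.map fun t => b t * |V.label t i|).sum ≤
      (u + (k : ℚ) • (θ.map fun t => b t • V.label t).sum) i) →
    V.NNRunFrom p u (List.replicate k θ).flatten p
      (u + (k : ℚ) • (θ.map fun t => b t • V.label t).sum) := by
  intro k
  induction k with
  | zero => intro u hu _ _; simpa using NNRunFrom.nil p u hu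
  | succ k ih =>
    intro u hu hu1 hu2
    have r1 := one_iter h b u h0 h1 hu1
    have e : u + ((k + 1 : ℕ) : ℚ) • (θ.map fun t => b t • V.label t).sum =
      (u + (θ.map fun t => b t • V.label t).sum) +
        (k : ℚ) • (θ.map fun t => b t • V.label t).sum := by
      push_cast
      rw [add_smul, one_smul]
      abel
    rw [e] at hu2 ⊢
    rw [List.replicate_succ, List.flatten_cons]
    refine r1.append (ih _ r1.nonneg_end ?_ hu2)
    intro i
    have a1 := hu1 i
    have a2 := hu2 i
    simp only [Pi.add_apply, Pi.smul_apply, smul_eq_mul] at a2 ⊢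
    generalize (θ.map fun t => b t • V.label t).sum i = s at *
    rcases le_total 0 s with hs | hs
    · linarith
    · have : (k : ℚ) * s ≤ 0 := mul_nonpos_of_nonneg_of_nonpos (by positivity) hs
      linarith

theorem middle {p : V.Q} {θ : List (V.Q × V.Q)} (h : V.PathFrom p θ p) {z z' : Fin d → ℚ}
    (hz : ∀ i, 0 ≤ z i) (hz' : ∀ i, 0 ≤ z' i)
    (hp : ∀ t ∈ θ, ∀ i, V.label t i ≠ 0 → 0 < z i)
    (hp' : ∀ t ∈ θ, ∀ i, V.label t i ≠ 0 → 0 < z' i)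
    (hS : PosComb V θ.toFinset (z' - z)) :
    ∃ k, V.NNRunFrom p z (List.replicate k θ).flatten p z' := by
  obtain ⟨w, hw, hv⟩ := hS
  set a : V.Q × V.Q → ℚ := fun t => w t / (θ.count t : ℚ) with ha
  have hc : ∀ t ∈ θ, 0 < (θ.count t : ℚ) := fun t ht => by
    exact_mod_cast List.count_pos_iff.2 ht
  have ha0 : ∀ t ∈ θ, 0 < a t := fun t ht =>
    div_pos (hw t (List.mem_toFinset.2 ht)) (hc t ht)
  have hsum : (θ.map fun t => a t • V.label t).sum = z' - z := by
    rw [hv, Finset.sum_list_map_count]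
    apply Finset.sum_congr rfl
    intro t ht
    have := (hc t (List.mem_toFinset.1 ht)).ne'
    rw [← Nat.cast_smul_eq_nsmul ℚ, smul_smul]
    congr 1
    simp only [ha]
    field_simp
    rw [mul_comm]
    congr 2
    congr 1
    exact lawful_beq_subsingleton _ _
  have ex1 : ∀ i, ∀ u : Fin d → ℚ, (∀ i, 0 ≤ u i) →
      (∀ t ∈ θ, ∀ i, V.label t i ≠ 0 → 0 < u i) →
      ∀ᶠ k : ℕ in Filter.atTop, (θ.map fun t => a t * |V.label t i|).sum ≤ k * u i := by
    intro i u hu hu'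
    by_cases hui : 0 < u i
    · obtain ⟨N, hN⟩ := exists_nat_ge ((θ.map fun t => a t * |V.label t i|).sum / u i)
      filter_upwards [Filter.eventually_ge_atTop N] with k hk
      rw [← div_le_iff₀ hui]
      exact hN.trans (by exact_mod_cast hk)
    · refine Filter.Eventually.of_forall fun k => ?_
      have : (θ.map fun t => a t * |V.label t i|).sum = 0 := by
        apply List.sum_eq_zero
        intro s hs
        obtain ⟨t, ht, rfl⟩ := List.mem_map.1 hs
        have : V.label t i = 0 := by
          by_contra hne
          exact hui (hu' t ht i hne)
        simp [this]
      rw [this]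
      have := hu i
      positivity
  have ex2 : ∀ᶠ k : ℕ in Filter.atTop, ∀ t ∈ θ.toFinset, a t ≤ k := by
    rw [Filter.eventually_all_finset]
    intro t _
    obtain ⟨N, hN⟩ := exists_nat_ge (a t)
    filter_upwards [Filter.eventually_ge_atTop N] with k hk
    exact hN.trans (by exact_mod_cast hk)
  obtain ⟨k, k1, k2, k3, k4⟩ := ((Filter.eventually_all.2 fun i => ex1 i z hz hp).and
    ((Filter.eventually_all.2 fun i => ex1 i z' hz' hp').and
    (ex2.and (Filter.eventually_ge_atTop 1)))).exists
  have hk : 0 < (k : ℚ) := by exact_mod_cast k4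
  have e1 : ∀ i, (θ.map fun t => (a t / k) * |V.label t i|).sum =
      (θ.map fun t => a t * |V.label t i|).sum / k := by
    intro i
    rw [div_eq_mul_inv, mul_comm, ← List.sum_map_mul_left]
    congr 1
    apply List.map_congr_left
    intro t _
    ring
  have e2 : z + (k : ℚ) • (θ.map fun t => (a t / k) • V.label t).sum = z' := by
    rw [List.smul_sum, List.map_map]
    have : (θ.map ((fun v => (k : ℚ) • v) ∘ fun t => (a t / k) • V.label t)) =
        θ.map fun t => a t • V.label t := by
      apply List.map_congr_left
      intro t _
      simp only [Function.comp, smul_smul]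
      congr 1
      field_simp
    rw [this, hsum]
    abel
  refine ⟨k, ?_⟩
  have := iterate h (fun t => a t / k) (fun t ht => div_pos (ha0 t ht) hk)
    (fun t ht => (div_le_one hk).2 (k3 t (List.mem_toFinset.2 ht))) k z hz
    (fun i => by rw [e1, div_le_iff₀ hk, mul_comm]; exact k1 i)
    (fun i => by rw [e2, e1, div_le_iff₀ hk, mul_comm]; exact k2 i)
  rwa [e2] at this

theorem mem_split {p : V.Q} {χ : List (V.Q × V.Q)} (h : V.PathFrom p χ p)
    {t : V.Q × V.Q} (ht : t ∈ χ) :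
    ∃ a b, V.PathFrom p a t.1 ∧ V.PathFrom t.2 b p ∧ t ∈ V.T ∧ (∀ s ∈ a, s ∈ χ) ∧
      (∀ s ∈ b, s ∈ χ) := by
  obtain ⟨a, b, rfl⟩ := List.append_of_mem ht
  obtain ⟨q, h1, h2⟩ := h.split a
  cases h2 with
  | cons hT h2 =>
  refine ⟨a, b, h1, h2, hT, ?_, ?_⟩
  · intro s hs; simp [hs]
  · intro s hs; simp [hs]

theorem dummy {p : V.Q} {χ : List (V.Q × V.Q)} (h : V.PathFrom p χ p)
    {t : V.Q × V.Q} (ht : t ∈ χ) :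
    (∃ c, V.PathFrom t.1 c t.1 ∧ c ≠ [] ∧ c.length ≤ Fintype.card V.Q) ∧
      (∃ c, V.PathFrom t.2 c t.2 ∧ c ≠ [] ∧ c.length ≤ Fintype.card V.Q) := by
  obtain ⟨a, b, h1, h2, hT, _, _⟩ := mem_split h ht
  obtain ⟨σ, s1, s2, _⟩ := exists_simple (h2.append h1)
  have := simple_length s2
  obtain ⟨t1, t2⟩ := t
  refine ⟨⟨(t1, t2) :: σ, PathFrom.cons hT s1, by simp, by simpa using this⟩,
    ⟨σ ++ [(t1, t2)], s1.append (PathFrom.cons hT (PathFrom.nil _)), by simp, by simpa using this⟩⟩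

theorem big_cycle {p : V.Q} {χ : List (V.Q × V.Q)} (h : V.PathFrom p χ p)
    (S : Finset (V.Q × V.Q)) : (∀ t ∈ S, t ∈ χ) →
    ∃ θ, V.PathFrom p θ p ∧ (∀ t ∈ S, t ∈ θ) ∧ (∀ t ∈ θ, t ∈ χ) ∧
      θ.length ≤ S.card * (2 * Fintype.card V.Q) := by
  induction S using Finset.induction_on with
  | empty => exact fun _ => ⟨[], PathFrom.nil _, by simp, by simp, by simp⟩
  | insert t S htS ih =>
    intro hS
    obtain ⟨θ, t1, t2, t3, t4⟩ := ih fun s hs => hS s (Finset.mem_insert_of_mem hs)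
    have ht := hS t (Finset.mem_insert_self _ _)
    obtain ⟨a, b, h1, h2, hT, ha, hb⟩ := mem_split h ht
    obtain ⟨σ, s1, s2, s3⟩ := exists_simple h1
    obtain ⟨τ, r1, r2, r3⟩ := exists_simple h2
    have l1 := simple_length s2
    have l2 := simple_length r2
    obtain ⟨u, v⟩ := t
    refine ⟨σ ++ ((u, v) :: τ) ++ θ, (s1.append (PathFrom.cons hT r1)).append t1, ?_, ?_, ?_⟩
    · intro s hs
      rcases Finset.mem_insert.1 hs with rfl | hs
      · simp
      · simp [t2 s hs]
    · intro s hs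
      simp only [List.mem_append, List.mem_cons] at hs
      rcases hs with (hs | rfl | hs) | hs
      · exact ha s (s3 s hs)
      · exact ht
      · exact hb s (r3 s hs)
      · exact t3 s hs
    · rw [Finset.card_insert_of_notMem htS, add_mul]
      simp only [List.length_append, List.length_cons]
      omega

theorem zc_le (x : Fin d → ℚ) : (zc x).card ≤ d := by
  simpa using Finset.card_le_univ (zc x)

theorem zt_le (x : Fin d → ℚ) : (zt V x).card ≤ V.T.card :=
  Finset.card_le_card (Finset.filter_subset _ _)

theorem rp_mem {Q : Type} {π : List (Q × Q)} {t : Q × Q} : t ∈ rp π ↔ t.swap ∈ π := by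
  simp only [rp, List.mem_reverse, List.mem_map]
  constructor
  · rintro ⟨s, hs, rfl⟩; simpa using hs
  · intro h; exact ⟨_, h, by simp⟩

theorem posComb_rev {χ : List (V.Q × V.Q)} {v : Fin d → ℚ}
    (h : PosComb V.rev (rp χ).toFinset v) : PosComb V χ.toFinset (-v) := by
  obtain ⟨w, hw, rfl⟩ := h
  refine ⟨fun t => w t.swap, ?_, ?_⟩
  · intro t ht
    exact hw _ (List.mem_toFinset.2 (rp_mem.2 (by simpa using ht)))
  · rw [← Finset.sum_neg_distrib]
    refine Finset.sum_bij (fun t _ => Prod.swap t) ?_ ?_ ?_ ?_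
    · intro t ht
      exact List.mem_toFinset.2 (rp_mem.1 (List.mem_toFinset.1 ht))
    · intro a _ b _ hab
      exact Prod.swap_injective hab
    · intro b hb
      exact ⟨b.swap, List.mem_toFinset.2 (rp_mem.2 (by simpa using hb)), by simp⟩
    · intro a _
      simp

theorem main_aux (p : V.Q) (x y : Fin d → ℚ) (χ : List (V.Q × V.Q)) (hne : χ ≠ [])
    (hcyc : V.PathFrom p χ p) (hrun : V.NNRunFrom p x χ p y) (B : ℕ)
    (hB : V.T.card * (2 * Fintype.card V.Q) ≤ B) :
    ∃ n, n ≤ 2 * (V.T.card + d) + 1 ∧ LRun V B p x n p y := by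
  obtain ⟨θ, t1, t2, t3, t4⟩ := big_cycle hcyc χ.toFinset (fun t ht => List.mem_toFinset.1 ht)
  have hθS : θ.toFinset = χ.toFinset := by
    ext t
    rw [List.mem_toFinset]
    exact ⟨fun h => List.mem_toFinset.2 (t3 t h), t2 t⟩
  have hsub : χ.toFinset ⊆ V.T := fun t ht => hcyc.mem t (List.mem_toFinset.1 ht)
  have hθB : θ.length ≤ B :=
    (t4.trans (Nat.mul_le_mul_right _ (Finset.card_le_card hsub))).trans hB
  obtain ⟨t0, ht0⟩ := List.exists_mem_of_ne_nil χ hne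
  have hTpos : 1 ≤ V.T.card := Finset.card_pos.2 ⟨t0, hcyc.mem t0 ht0⟩
  have hQB : Fintype.card V.Q ≤ B := by nlinarith
  have hθ0 : θ ≠ [] := List.ne_nil_of_mem (t2 t0 (List.mem_toFinset.2 ht0))
  obtain ⟨n, z, r1, r2, r3, r4, r5, r6⟩ := forward (V := V) (S := χ.toFinset) (B := B)
    (fun t ht => by
      obtain ⟨⟨c, h1, h2, h3⟩, ⟨c', h1', h2', h3'⟩⟩ := dummy hcyc (List.mem_toFinset.1 ht)
      exact ⟨⟨c, h1, h2, h3.trans hQB⟩, ⟨c', h1', h2', h3'.trans hQB⟩⟩)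
    y χ p p p [] x (PathFrom.nil _) (by simp) (by simp) hcyc (by simp) hrun.feas
    hrun.nonneg_start hrun.posComb
  have hrev := hrun.rev
  have hcr := hcyc.rev
  have hpos : PosComb V.rev (rp χ).toFinset (z - y) := by
    obtain ⟨w, hw, he⟩ := r6
    refine ⟨fun t => w t.swap, ?_, ?_⟩
    · intro t ht
      exact hw _ (List.mem_toFinset.2 (rp_mem.1 (List.mem_toFinset.1 ht)))
    · rw [← neg_sub, he, ← Finset.sum_neg_distrib]
      refine Finset.sum_bij (fun t _ => Prod.swap t) ?_ ?_ ?_ ?_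
      · intro t ht
        exact List.mem_toFinset.2 (rp_mem.2 (by simpa using ht))
      · intro a _ b _ hab
        exact Prod.swap_injective hab
      · intro b hb
        exact ⟨b.swap, List.mem_toFinset.2 (rp_mem.1 (List.mem_toFinset.1 hb)), by simp⟩
      · intro a _
        simp [CVASS.rev]
  obtain ⟨m, z', q1, q2, q3, q4, q5, q6⟩ := forward (V := V.rev) (S := (rp χ).toFinset) (B := B)
    (fun t ht => by
      obtain ⟨⟨c, h1, h2, h3⟩, ⟨c', h1', h2', h3'⟩⟩ := dummy hcr (List.mem_toFinset.1 ht)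
      exact ⟨⟨c, h1, h2, h3.trans hQB⟩, ⟨c', h1', h2', h3'.trans hQB⟩⟩)
    z (rp χ) p p p [] y (PathFrom.nil _) (by simp) (by simp) hcr (by simp) hrev.feas
    hrev.nonneg_start hpos
  have hcardT : V.rev.T.card ≤ V.T.card := Finset.card_image_le
  have hq5 : ∀ t ∈ χ, ∀ i, V.label t i ≠ 0 → 0 < z' i := by
    intro t ht i hi
    refine q5 t.swap (rp_mem.2 (by simpa using ht)) i ?_
    simpa [CVASS.rev] using hi
  have hfin : PosComb V θ.toFinset (z' - z) := by
    have := posComb_rev q6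
    rw [hθS]
    rwa [neg_sub] at this
  obtain ⟨k, hk⟩ := middle t1 r3 q3 (fun t ht => r5 t (t3 t ht)) (fun t ht => hq5 t (t3 t ht)) hfin
  refine ⟨n + m + 1, ?_, LRun.append r2 t1 hθ0 hθB hk q2.of_rev⟩
  have b1 := zc_le x
  have b2 := zt_le (V := V) x
  have b3 := zc_le y
  have b4 := zt_le (V := V.rev) y
  omega

end helpers

end CVASS

/-- short LPS for nonnegative reachability along a cycle.
If `χ` is a cycle at `p` and `p(x) →^χ p(y)` in the nonnegative semantics,
then there is a linear path scheme `σ = π₀ χ₁* π₁ ⋯ χₙ* πₙ` from `p` to `p`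
with `n ≤ 2(|T| + d + 1) + 1`, simple paths, cycles of length at most
`2·|Q|·(d·|T|^(d+1) + 1)`, and `y ∈ Reach^x_{≥0}(σ)`. -/
theorem short_lps_for_cycle_nonneg {d : ℕ} (V : CVASS d) (p : V.Q)
    (x y : Fin d → ℚ) (hx : ∀ i, 0 ≤ x i) (hy : ∀ i, 0 ≤ y i)
    (χ : List (V.Q × V.Q)) (hne : χ ≠ []) (hcyc : V.PathFrom p χ p)
    (hrun : V.NNRunFrom p x χ p y) :
    ∃ (n : ℕ) (s : Fin (n + 2) → V.Q) (πs : Fin (n + 1) → List (V.Q × V.Q))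
      (χs : Fin n → List (V.Q × V.Q)),
      n ≤ 2 * (V.T.card + d + 1) + 1 ∧
      s 0 = p ∧ s (Fin.last (n + 1)) = p ∧
      (∀ i : Fin (n + 1), V.PathFrom (s i.castSucc) (πs i) (s i.succ)) ∧
      (∀ i : Fin (n + 1), SimplePath (s i.castSucc) (πs i)) ∧
      (∀ i : Fin n, V.PathFrom (s i.succ.castSucc) (χs i) (s i.succ.castSucc) ∧
        χs i ≠ []) ∧
      (∀ i : Fin n, (χs i).length ≤
        2 * Fintype.card V.Q * (d * V.T.card ^ (d + 1) + 1)) ∧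
      (∃ ks : Fin n → ℕ, V.NNRunFrom p x (lpsConcat πs χs ks) p y) := by
  rcases Nat.eq_zero_or_pos d with hd | hd
  · subst hd
    have hxy : x = y := Subsingleton.elim _ _
    subst hxy
    obtain ⟨s, πs, χs, a0, a1, a2, a3, a4, a5, a6⟩ := CVASS.LRun.toFin
      (CVASS.LRun.last (B := 2 * Fintype.card V.Q * (0 * V.T.card ^ (0 + 1) + 1))
        (CVASS.PathFrom.nil p) (by simp [SimplePath, pathStates])
        (CVASS.NNRunFrom.nil p x hx))
    exact ⟨0, s, πs, χs, Nat.zero_le _, a0, a1, a2, a3, a4, a5, a6⟩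
  · have hB : V.T.card * (2 * Fintype.card V.Q) ≤
        2 * Fintype.card V.Q * (d * V.T.card ^ (d + 1) + 1) := by
      rw [mul_comm]
      apply Nat.mul_le_mul_left
      have h1 : V.T.card ≤ V.T.card ^ (d + 1) := Nat.le_self_pow (by omega) _
      have h2 : V.T.card ^ (d + 1) ≤ d * V.T.card ^ (d + 1) := Nat.le_mul_of_pos_left _ hd
      omega
    obtain ⟨n, hn, h⟩ := CVASS.main_aux p x y χ hne hcyc hrun _ hB
    obtain ⟨s, πs, χs, a0, a1, a2, a3, a4, a5, a6⟩ := h.toFin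
    exact ⟨n, s, πs, χs, by omega, a0, a1, a2, a3, a4, a5, a6⟩
end

section
/- Let X be a finite set of prime numbers and let C be a finite collection of subsets of X. Then there exists a subcollection C' ⊆ C whose members are pairwise disjoint and whose union is X if and only if there exists a subcollection C' ⊆ C with ∏_{c ∈ C'} ∏_{p ∈ c} p = ∏_{p ∈ X} p. (The reduction from ExactCover to PrimeCover: by uniqueness of prime factorization, a product over a subcollection equals the squarefree product of all primes in X exactly when the subcollection is an exact cover of X.) -/
/-- ExactCover reduces to PrimeCover. Let `X` be a finite
set of primes and `C` a finite collection of subsets of `X`. Then `C` has a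
subcollection of pairwise disjoint sets whose union is `X` iff `C` has a
subcollection `C'` with `∏_{c ∈ C'} ∏_{p ∈ c} p = ∏_{p ∈ X} p`. -/
theorem exactCover_iff_primeCover (X : Finset ℕ) (hX : ∀ p ∈ X, Nat.Prime p)
    (C : Finset (Finset ℕ)) (hC : ∀ c ∈ C, c ⊆ X) :
    (∃ C' ⊆ C, (∀ c₁ ∈ C', ∀ c₂ ∈ C', c₁ ≠ c₂ → Disjoint c₁ c₂) ∧
        C'.biUnion id = X) ↔
      (∃ C' ⊆ C, ∏ c ∈ C', ∏ p ∈ c, p = ∏ p ∈ X, p) := by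
  constructor
  · rintro ⟨C', hC', hd, hu⟩
    refine ⟨C', hC', ?_⟩
    rw [← hu, Finset.prod_biUnion]
    · rfl
    · intro a ha b hb hab
      exact hd a ha b hb hab
  · rintro ⟨C', hC', h⟩
    have key : (∑ c ∈ C', c.val) = X.val := by
      have h1 : (∑ c ∈ C', c.val).prod = X.val.prod := by
        rw [Multiset.prod_sum]
        simpa only [Finset.prod_val, id] using h
      have h2 := UniqueFactorizationMonoid.normalizedFactors_prod_of_prime
        (m := ∑ c ∈ C', c.val) (by
          intro p hp
          rw [Multiset.mem_sum] at hp
          obtain ⟨c, hc, hp⟩ := hp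
          exact (hX p (hC c (hC' hc) hp)).prime)
      have h3 := UniqueFactorizationMonoid.normalizedFactors_prod_of_prime
        (m := X.val) (fun p hp => (hX p hp).prime)
      rw [← h2, ← h3, h1]
    refine ⟨C', hC', ?_, ?_⟩
    · intro a ha b hb hab
      rw [Finset.disjoint_left]
      intro p hpa hpb
      have hle : ∑ c ∈ ({a, b} : Finset (Finset ℕ)), c.val ≤ ∑ c ∈ C', c.val := by
        apply Finset.sum_le_sum_of_subset
        intro x hx
        simp only [Finset.mem_insert, Finset.mem_singleton] at hx
        rcases hx with rfl | rfl <;> assumption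
      rw [key, Finset.sum_pair hab] at hle
      have hn := Multiset.nodup_of_le hle X.nodup
      exact Multiset.disjoint_left.1 (Multiset.nodup_add.1 hn).2.2 hpa hpb
    · ext p
      rw [← Finset.mem_val (s := X), ← key, Multiset.mem_sum]
      simp
end

section
/- Let d, e ∈ ℕ with d ≥ 2 and e ≥ 1, and let x ∈ ℚ with x > 0. Then there exist rationals α, β with 0 < α ≤ 1 and 0 < β ≤ 1 such that the first coordinate of (x, 0) + α • (-d^e, d^{e+1}) is 0 and the second coordinate of (x, 0) + α • (-d^e, d^{e+1}) + β • (d^e, -d^e) is 0, if and only if x ≤ d^{e-1}; moreover, in that case the coefficients are uniquely determined as α = x/d^e and β = x/d^{e-1}, and the resulting point is (d·x, 0). (Correctness of the multiplier gadget used in the NP-hardness proof for zero-test reachability in dimension 2.) -/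
/-- correctness of the multiplier gadget. Let `d ≥ 2`,
`e ≥ 1` and `x > 0` a rational. There exist coefficients `α, β ∈ (0,1]` such
that the first coordinate of `(x,0) + α • (-d^e, d^(e+1))` is `0` and the
second coordinate of `(x,0) + α • (-d^e, d^(e+1)) + β • (d^e, -d^e)` is `0`,
iff `x ≤ d^(e-1)`; moreover, in that case the coefficients are uniquely
determined as `α = x/d^e` and `β = x/d^(e-1)`, and the resulting point is
`(d·x, 0)`. -/
theorem multiplier_gadget (d e : ℕ) (hd : 2 ≤ d) (he : 1 ≤ e)
    (x : ℚ) (hx : 0 < x) :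
    ((∃ α β : ℚ, 0 < α ∧ α ≤ 1 ∧ 0 < β ∧ β ≤ 1 ∧
        (((x, 0) : ℚ × ℚ) + α • ((-(d : ℚ) ^ e, (d : ℚ) ^ (e + 1)) : ℚ × ℚ)).1 = 0 ∧
        (((x, 0) : ℚ × ℚ) + α • ((-(d : ℚ) ^ e, (d : ℚ) ^ (e + 1)) : ℚ × ℚ) +
            β • (((d : ℚ) ^ e, -(d : ℚ) ^ e) : ℚ × ℚ)).2 = 0) ↔
      x ≤ (d : ℚ) ^ (e - 1)) ∧
    (x ≤ (d : ℚ) ^ (e - 1) →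
      ∀ α β : ℚ, 0 < α → α ≤ 1 → 0 < β → β ≤ 1 →
        (((x, 0) : ℚ × ℚ) + α • ((-(d : ℚ) ^ e, (d : ℚ) ^ (e + 1)) : ℚ × ℚ)).1 = 0 →
        (((x, 0) : ℚ × ℚ) + α • ((-(d : ℚ) ^ e, (d : ℚ) ^ (e + 1)) : ℚ × ℚ) +
            β • (((d : ℚ) ^ e, -(d : ℚ) ^ e) : ℚ × ℚ)).2 = 0 →
        α = x / (d : ℚ) ^ e ∧ β = x / (d : ℚ) ^ (e - 1) ∧
        ((x, 0) : ℚ × ℚ) + α • ((-(d : ℚ) ^ e, (d : ℚ) ^ (e + 1)) : ℚ × ℚ) +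
            β • (((d : ℚ) ^ e, -(d : ℚ) ^ e) : ℚ × ℚ) = ((d : ℚ) * x, 0)) := by
  obtain ⟨k, rfl⟩ : ∃ k, e = k + 1 := ⟨e - 1, by omega⟩
  have hD : (2 : ℚ) ≤ (d : ℚ) := by exact_mod_cast hd
  have hD0 : (0 : ℚ) < (d : ℚ) := by linarith
  have hP : (0 : ℚ) < (d : ℚ) ^ k := by positivity
  simp only [Nat.add_sub_cancel, Prod.smul_mk, Prod.mk_add_mk, smul_eq_mul, pow_succ,
    Prod.mk.injEq]
  generalize (d : ℚ) ^ k = P at *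
  generalize (d : ℚ) = D at *
  have key : ∀ α β : ℚ, x + α * -(P * D) = 0 →
      0 + α * (P * D * D) + β * -(P * D) = 0 → x = β * P := by
    intro α β h1 h2
    apply mul_right_cancel₀ hD0.ne'
    linear_combination D * h1 + h2
  refine ⟨⟨?_, ?_⟩, ?_⟩
  · rintro ⟨α, β, -, -, hb, hb1, h1, h2⟩
    have := key α β h1 h2
    nlinarith
  · intro h
    refine ⟨x / (P * D), x / P, by positivity, ?_, by positivity, ?_, ?_, ?_⟩
    · rw [div_le_one (by positivity)]
      nlinarith
    · rwa [div_le_one hP]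
    · field_simp
      ring
    · field_simp
      ring
  · intro _ α β _ _ _ _ h1 h2
    have h3 := key α β h1 h2
    refine ⟨?_, ?_, ?_, h2⟩
    · rw [eq_div_iff (by positivity)]
      linear_combination -h1
    · rw [eq_div_iff hP.ne']
      exact h3.symm
    · linear_combination h1 - D * h3
end
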